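/- There exist a real number α > 0 and a natural number k₀ such that for every a ∈ ℝ² lying in the interior of the second quadrant or the interior of the fourth quadrant, and every integer k ≥ k₀, N_k(Σ₁, a) ≤ α·k⁴, where Σ₁ = {A₁, A₂}. -/

import Mathlib

open Matrix Set

noncomputable section

/-- `XSeq S a k` is the set of all vectors `T_{k-1} ⋯ T_0 · a` with each `T_j ∈ S`
(and `XSeq S a 0 = {a}`). -/
def XSeq {n : ℕ} (S : Set (Matrix (Fin n) (Fin n) ℝ)) (a : Fin n → ℝ) : ℕ → Set (Fin n → ℝ)
  | 0 => {a}
  | k + 1 => ⋃ A ∈ S, A.mulVec '' XSeq S a k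

/-- `PHull S a k` is the convex hull of `XSeq S a k`. -/
def PHull {n : ℕ} (S : Set (Matrix (Fin n) (Fin n) ℝ)) (a : Fin n → ℝ) (k : ℕ) :
    Set (Fin n → ℝ) :=
  convexHull ℝ (XSeq S a k)

/-- `EPts S a k` is the set of extreme points of `PHull S a k`. -/
def EPts {n : ℕ} (S : Set (Matrix (Fin n) (Fin n) ℝ)) (a : Fin n → ℝ) (k : ℕ) :
    Set (Fin n → ℝ) :=
  Set.extremePoints ℝ (PHull S a k)

/-- `NExt S a k` is the number of extreme points of `PHull S a k`. -/
def NExt {n : ℕ} (S : Set (Matrix (Fin n) (Fin n) ℝ)) (a : Fin n → ℝ) (k : ℕ) : ℕ :=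
  (EPts S a k).ncard

def M1 : Matrix (Fin 2) (Fin 2) ℝ := !![0, 1; 1, 0]
def M2 : Matrix (Fin 2) (Fin 2) ℝ := !![1, 1; 0, 1]
def M3 : Matrix (Fin 2) (Fin 2) ℝ := !![1, 0; 1, 1]
def M4 : Matrix (Fin 2) (Fin 2) ℝ := !![1, 1; 1, 0]
def M5 : Matrix (Fin 2) (Fin 2) ℝ := !![0, 1; 1, 1]

/-- Interior of the first quadrant. -/
def intQ1 : Set (Fin 2 → ℝ) := {c | 0 < c 0 ∧ 0 < c 1}
/-- Interior of the second quadrant. -/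
def intQ2 : Set (Fin 2 → ℝ) := {c | c 0 < 0 ∧ 0 < c 1}
/-- Interior of the third quadrant. -/
def intQ3 : Set (Fin 2 → ℝ) := {c | c 0 < 0 ∧ c 1 < 0}
/-- Interior of the fourth quadrant. -/
def intQ4 : Set (Fin 2 → ℝ) := {c | 0 < c 0 ∧ c 1 < 0}

/-- 2 by 2 matrices with natural number entries. -/
@[ext] structure Q where
  a : ℕ
  b : ℕ
  c : ℕ
  d : ℕ

namespace Q

def mul (x y : Q) : Q :=
  ⟨x.a * y.a + x.b * y.c, x.a * y.b + x.b * y.d, x.c * y.a + x.d * y.c, x.c * y.b + x.d * y.d⟩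

def one : Q := ⟨1, 0, 0, 1⟩

def le (x y : Q) : Prop := x.a ≤ y.a ∧ x.b ≤ y.b ∧ x.c ≤ y.c ∧ x.d ≤ y.d

def sum (x : Q) : ℕ := x.a + x.b + x.c + x.d

def lt (x y : Q) : Prop := x.a ≤ y.a ∧ x.b ≤ y.b ∧ x.c ≤ y.c ∧ x.d ≤ y.d ∧
  x.a + x.b + x.c + x.d < y.a + y.b + y.c + y.d

instance (x y : Q) : Decidable (le x y) := by unfold le; infer_instance
instance (x y : Q) : Decidable (lt x y) := by unfold lt; infer_instance

theorem mul_assoc (x y z : Q) : mul (mul x y) z = mul x (mul y z) := by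
  ext <;> simp only [mul] <;> ring

theorem one_mul (x : Q) : mul one x = x := by
  ext <;> simp [mul, one]

theorem mul_one (x : Q) : mul x one = x := by
  ext <;> simp [mul, one]

theorem le_mul {x y x' y' : Q} (h : le x x') (h' : le y y') : le (mul x y) (mul x' y') := by
  obtain ⟨h1, h2, h3, h4⟩ := h
  obtain ⟨k1, k2, k3, k4⟩ := h'
  refine ⟨?_, ?_, ?_, ?_⟩ <;> simp only [mul] <;> gcongr

theorem le_refl (x : Q) : le x x := ⟨le_rfl, le_rfl, le_rfl, le_rfl⟩

theorem le_trans {x y z : Q} (h : le x y) (h' : le y z) : le x z :=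
  ⟨h.1.trans h'.1, h.2.1.trans h'.2.1, h.2.2.1.trans h'.2.2.1, h.2.2.2.trans h'.2.2.2⟩

theorem lt.le {x y : Q} (h : lt x y) : le x y := ⟨h.1, h.2.1, h.2.2.1, h.2.2.2.1⟩

end Q

/-- Letter matrices: `true` is the shear, `false` is the swap. -/
def letM (t : Bool) : Q := if t then ⟨1, 1, 0, 1⟩ else ⟨0, 1, 1, 0⟩

/-- Matrix of a word. -/
def wm : List Bool → Q
  | [] => Q.one
  | t :: w => Q.mul (letM t) (wm w)

theorem wm_append (x y : List Bool) : wm (x ++ y) = Q.mul (wm x) (wm y) := by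
  induction x with
  | nil => simp [wm, Q.one_mul]
  | cons t x ih => simp [wm, ih, Q.mul_assoc]

theorem letM_mul_lt (t : Bool) {x y : Q} (h : Q.lt x y) : Q.lt (Q.mul (letM t) x) (Q.mul (letM t) y) := by
  obtain ⟨h1, h2, h3, h4, h5⟩ := h
  cases t <;> simp [letM, Q.mul, Q.lt] <;> omega

theorem mul_letM_lt (t : Bool) {x y : Q} (h : Q.lt x y) : Q.lt (Q.mul x (letM t)) (Q.mul y (letM t)) := by
  obtain ⟨h1, h2, h3, h4, h5⟩ := h
  cases t <;> simp [letM, Q.mul, Q.lt] <;> omega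

theorem wm_ctx_lt (p q : List Bool) {x y : Q} (h : Q.lt x y) :
    Q.lt (Q.mul (wm p) (Q.mul x (wm q))) (Q.mul (wm p) (Q.mul y (wm q))) := by
  induction p with
  | nil =>
    simp only [wm, Q.one_mul]
    induction q generalizing x y with
    | nil => simpa [wm, Q.mul_one] using h
    | cons t q ih =>
      simp only [wm, ← Q.mul_assoc]
      exact ih (mul_letM_lt t h)
  | cons t p ih =>
    simp only [wm, Q.mul_assoc]
    exact letM_mul_lt t ih

theorem wm_sum_le (w : List Bool) : (wm w).sum ≤ 2 * 2 ^ w.length := by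
  induction w with
  | nil => simp [wm, Q.one, Q.sum]
  | cons t w ih =>
    simp only [Q.sum, List.length_cons, pow_succ] at *
    cases t <;> simp [wm, letM, Q.mul] <;> omega

/-- Word of a digit sequence. -/
def fw (l : List ℕ) : List Bool := l.flatMap (fun a => false :: List.replicate a true)

theorem fw_append (x y : List ℕ) : fw (x ++ y) = fw x ++ fw y := by simp [fw]

def mat (l : List ℕ) : Q := wm (fw l)

theorem mat_append (x y : List ℕ) : mat (x ++ y) = Q.mul (mat x) (mat y) := by
  simp [mat, fw_append, wm_append]

theorem wm_rep (a : ℕ) : wm (List.replicate a true) = ⟨1, a, 0, 1⟩ := by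
  induction a with
  | zero => simp [wm, Q.one]
  | succ n ih => simp [List.replicate_succ, wm, ih, letM, Q.mul]

theorem mat_single (a : ℕ) : mat [a] = ⟨0, 1, 1, a⟩ := by
  simp [mat, fw, wm, wm_rep, letM, Q.mul]

theorem mat_nil : mat [] = Q.one := by simp [mat, fw, wm]

theorem mat_cons (a : ℕ) (l : List ℕ) : mat (a :: l) = Q.mul ⟨0, 1, 1, a⟩ (mat l) := by
  rw [← mat_single, ← mat_append]; rfl

/-- Computable version of `mat`. -/
def matc : List ℕ → Q
  | [] => Q.one
  | a :: l => Q.mul ⟨0, 1, 1, a⟩ (matc l)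

theorem mat_eq_matc (l : List ℕ) : mat l = matc l := by
  induction l with
  | nil => exact mat_nil
  | cons a l ih => rw [mat_cons, ih]; rfl

def wt (l : List ℕ) : ℕ := (fw l).length

theorem wt_append (x y : List ℕ) : wt (x ++ y) = wt x + wt y := by simp [wt, fw_append]

theorem wt_nil : wt [] = 0 := rfl

theorem wt_cons (a : ℕ) (l : List ℕ) : wt (a :: l) = a + 1 + wt l := by
  simp [wt, fw]; omega

theorem wt_replicate (n a : ℕ) : wt (List.replicate n a) = n * (a + 1) := by
  induction n with
  | zero => simp [wt_nil]
  | succ n ih => rw [List.replicate_succ, wt_cons, ih]; ring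

def Irr (l : List ℕ) : Prop :=
  ∀ p w q w', l = p ++ w ++ q → wt w' = wt w → ¬ Q.lt (mat w) (mat w')

theorem exists_irr (l : List ℕ) : ∃ l', wt l' = wt l ∧ Q.le (mat l) (mat l') ∧ Irr l' := by
  induction hn : 2 * 2 ^ wt l - (mat l).sum using Nat.strong_induction_on generalizing l with
  | _ n ih =>
    by_cases h : Irr l
    · exact ⟨l, rfl, Q.le_refl _, h⟩
    · unfold Irr at h
      push Not at h
      obtain ⟨p, w, q, w', hl, hw, hlt⟩ := h
      have h1 : Q.lt (mat l) (mat (p ++ w' ++ q)) := by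
        rw [hl]
        simp only [mat_append, Q.mul_assoc]
        exact wm_ctx_lt _ _ hlt
      have h2 : wt (p ++ w' ++ q) = wt l := by
        rw [hl]; simp [wt_append, hw]
      have h3 : (mat (p ++ w' ++ q)).sum ≤ 2 * 2 ^ wt (p ++ w' ++ q) := wm_sum_le _
      have h4 := h1.2.2.2.2
      simp only [Q.sum] at h3 hn
      obtain ⟨l', e1, e2, e3⟩ := ih _ (by simp only [Q.sum]; rw [h2] at *; omega) (p ++ w' ++ q) rfl
      exact ⟨l', e1.trans h2, Q.le_trans h1.le e2, e3⟩

theorem fam {P R P' R' : List ℕ}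
    (h0 : Q.lt (matc (P ++ R)) (matc (P' ++ R')))
    (h1 : Q.lt (matc (P ++ 3 :: R)) (matc (P' ++ 3 :: R'))) (j : ℕ) :
    Q.lt (mat (P ++ (List.replicate j 3 ++ R))) (mat (P' ++ (List.replicate j 3 ++ R'))) := by
  have key : ∀ X Y : List ℕ, ∀ j, let f := fun j => mat (X ++ (List.replicate j 3 ++ Y))
      (f (j+1+1)).a = 3 * (f (j+1)).a + (f j).a ∧ (f (j+1+1)).b = 3 * (f (j+1)).b + (f j).b ∧
      (f (j+1+1)).c = 3 * (f (j+1)).c + (f j).c ∧ (f (j+1+1)).d = 3 * (f (j+1)).d + (f j).d := by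
    intro X Y j
    simp only [List.replicate_succ, mat_append, List.cons_append, mat_cons, Q.mul]
    refine ⟨?_, ?_, ?_, ?_⟩ <;> ring
  suffices H : ∀ j, Q.lt (mat (P ++ (List.replicate j 3 ++ R))) (mat (P' ++ (List.replicate j 3 ++ R')))
    ∧ Q.lt (mat (P ++ (List.replicate (j+1) 3 ++ R))) (mat (P' ++ (List.replicate (j+1) 3 ++ R'))) from (H j).1
  intro j
  induction j with
  | zero =>
    simp only [← mat_eq_matc] at h0 h1
    exact ⟨by simpa using h0, by simpa using h1⟩
  | succ j ih =>
    refine ⟨ih.2, ?_⟩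
    have a1 := key P R j
    have a2 := key P' R' j
    obtain ⟨b1, b2⟩ := ih
    simp only [Q.lt] at *
    omega

abbrev D (x : ℕ) : Prop := x = 2 ∨ x = 3 ∨ x = 4

theorem Irr.fam {l P R P' R' p q : List ℕ} {j : ℕ} (h : Irr l)
    (hl : l = p ++ (P ++ (List.replicate j 3 ++ R)) ++ q)
    (h0 : Q.lt (matc (P ++ R)) (matc (P' ++ R')) ∧ Q.lt (matc (P ++ 3 :: R)) (matc (P' ++ 3 :: R')))
    (hw : wt P + wt R = wt P' + wt R') : False := by
  refine h p _ q (P' ++ (List.replicate j 3 ++ R')) hl ?_ (_root_.fam h0.1 h0.2 j)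
  simp only [wt_append]; omega

theorem irr_4 {l p q : List ℕ} {x f y j : ℕ} (h : Irr l) (hx : D x) (hy : D y) (hf : f = 2 ∨ f = 4)
    (hl : l = p ++ ([x, 4] ++ (List.replicate j 3 ++ [f, y])) ++ q) : False := by
  rcases hf with rfl | rfl
  · refine h.fam (P' := [x, 3]) (R' := [3, y]) hl ?_ (by simp [wt_cons, wt_nil]; omega)
    rcases hx with rfl | rfl | rfl <;> rcases hy with rfl | rfl | rfl <;> decide
  · refine h.fam (P' := [x, 3]) (R' := [2, 2, y]) hl ?_ (by simp [wt_cons, wt_nil]; omega)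
    rcases hx with rfl | rfl | rfl <;> rcases hy with rfl | rfl | rfl <;> decide

theorem irr_24 {l p q : List ℕ} {x y j : ℕ} (h : Irr l) (hx : D x) (hy : D y)
    (hl : l = p ++ ([x, 2] ++ (List.replicate j 3 ++ [4, y])) ++ q) : False := by
  refine h.fam (P' := [x, 3]) (R' := [3, y]) hl ?_ (by simp [wt_cons, wt_nil]; omega)
  rcases hx with rfl | rfl | rfl <;> rcases hy with rfl | rfl | rfl <;> decide

theorem irr_2222 {l p q : List ℕ} {x y j : ℕ} (h : Irr l) (hx : D x) (hy : D y)
    (hl : l = p ++ ([x, 2, 2] ++ (List.replicate j 3 ++ [2, 2, y])) ++ q) : False := by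
  refine h.fam (P' := [x, 3, 3]) (R' := [3, y]) hl ?_ (by simp [wt_cons, wt_nil]; omega)
  rcases hx with rfl | rfl | rfl <;> rcases hy with rfl | rfl | rfl <;> decide

theorem irr_22 {l p q : List ℕ} {x x' y y' j : ℕ} (h : Irr l) (hx : D x) (hy : D y)
    (hx' : D x') (hy' : D y')
    (hl : l = p ++ ([x', x, 2, 3] ++ (List.replicate j 3 ++ [2, y, y'])) ++ q) : False := by
  by_cases h1 : y = 2
  · by_cases h2 : x = 2
    · subst h1 h2
      refine irr_2222 (j := j + 1) (p := p) (q := q) h hx' hy' ?_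
      rw [hl]; simp [List.replicate_succ]
    · refine h.fam (p := p ++ [x']) (q := y' :: q) (P := [x, 2, 3]) (R := [2, y]) (P' := [x, 3])
        (R' := [2, 2, y]) (j := j) ?_ ?_ (by simp [wt_cons, wt_nil]; omega)
      · rw [hl]; simp
      · rcases hx with rfl | rfl | rfl <;> rcases hy with rfl | rfl | rfl <;> first | decide | omega
  · refine h.fam (p := p ++ [x']) (q := y' :: q) (P := [x, 2, 3]) (R := [2, y]) (P' := [x, 2, 2])
        (R' := [3, y]) (j := j) ?_ ?_ (by simp [wt_cons, wt_nil]; omega)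
    · rw [hl]; simp
    · rcases hx with rfl | rfl | rfl <;> rcases hy with rfl | rfl | rfl <;> first | decide | omega

theorem irr_le4 {l : List ℕ} (h : Irr l) : ∀ a ∈ l, a ≤ 4 := by
  intro a ha
  by_contra hc
  obtain ⟨s, t, rfl⟩ := List.append_of_mem ha
  refine h s [a] t [2, a - 3] (by simp) (by simp [wt_cons, wt_nil]; omega) ?_
  simp [mat_eq_matc, matc, Q.mul, Q.one, Q.lt]
  omega

theorem irr_ge2 {p q : List ℕ} {x y z : ℕ} (h : Irr (p ++ [x, y, z] ++ q)) : 2 ≤ y := by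
  by_contra hc
  have : y = 0 ∨ y = 1 := by omega
  rcases this with rfl | rfl
  · refine h p _ q [x + z + 2] rfl (by simp [wt_cons, wt_nil]; omega) ?_
    simp [mat_eq_matc, matc, Q.mul, Q.one, Q.lt]
    omega
  · refine h p _ q [x + 1, z + 1] rfl (by simp [wt_cons, wt_nil]; omega) ?_
    simp [mat_eq_matc, matc, Q.mul, Q.one, Q.lt]
    ring_nf
    omega

theorem irr_interior {d : List ℕ} {a e : ℕ} (h : Irr (a :: (d ++ [e]))) : ∀ y ∈ d, D y := by
  intro y hy
  have h4 := irr_le4 h y (by simp [hy])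
  obtain ⟨s, t, rfl⟩ := List.append_of_mem hy
  obtain ⟨z, t', ht⟩ : ∃ z t', t ++ [e] = z :: t' := by
    cases t with
    | nil => exact ⟨e, [], rfl⟩
    | cons b t => exact ⟨b, t ++ [e], rfl⟩
  obtain ⟨s', x, hs⟩ : ∃ s' x, a :: s = s' ++ [x] :=
    ⟨(a :: s).dropLast, (a :: s).getLast (by simp), (List.dropLast_append_getLast _).symm⟩
  have e1 : a :: (s ++ y :: t ++ [e]) = s' ++ [x, y, z] ++ t' := by
    calc a :: (s ++ y :: t ++ [e]) = (a :: s) ++ y :: (t ++ [e]) := by simp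
      _ = _ := by rw [hs, ht]; simp
  rw [e1] at h
  have := irr_ge2 h
  unfold D
  omega

theorem split3 (c : List ℕ) (hc : ∀ y ∈ c, D y) :
    (c = List.replicate c.length 3) ∨
      ∃ n f r, c = List.replicate n 3 ++ f :: r ∧ (f = 2 ∨ f = 4) ∧ ∀ y ∈ r, D y := by
  induction c with
  | nil => left; rfl
  | cons a c ih =>
    have ha := hc a (by simp)
    have hc' : ∀ y ∈ c, D y := fun y hy => hc y (by simp [hy])
    by_cases h3 : a = 3
    · rcases ih hc' with h | ⟨n, f, r, h1, h2, h3'⟩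
      · left
        rw [List.length_cons, List.replicate_succ, ← h, h3]
      · right
        exact ⟨n + 1, f, r, by rw [List.replicate_succ, h1, h3]; simp, h2, h3'⟩
    · right
      exact ⟨0, a, c, by simp, by unfold D at ha; omega, hc'⟩

theorem core_form {l c : List ℕ} {a x1 x2 y2 y1 e : ℕ} (h : Irr l)
    (hl : l = [a, x1, x2] ++ c ++ [y2, y1, e])
    (hd : ∀ y ∈ [x1, x2] ++ c ++ [y2, y1], D y) :
    ∃ i j v, c = List.replicate i 3 ++ v ++ List.replicate j 3 ∧ v.length ≤ 3 ∧ ∀ y ∈ v, y ≤ 4 := by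
  have hx1 : D x1 := hd _ (by simp)
  have hx2 : D x2 := hd _ (by simp)
  have hy1 : D y1 := hd _ (by simp)
  have hy2 : D y2 := hd _ (by simp)
  have hc : ∀ y ∈ c, D y := fun y hy => hd y (by simp [hy])
  have suf : ∀ r : List ℕ, (∀ y ∈ r, D y) → ∃ y y' q, r ++ [y2, y1, e] = y :: y' :: q ∧ D y ∧ D y' := by
    intro r hr
    match r, hr with
    | [], _ => exact ⟨y2, y1, [e], rfl, hy2, hy1⟩
    | [b], hr => exact ⟨b, y2, [y1, e], rfl, hr _ (by simp), hy2⟩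
    | b :: b' :: r, hr => exact ⟨b, b', r ++ [y2, y1, e], rfl, hr _ (by simp), hr _ (by simp)⟩
  rcases split3 c hc with h0 | ⟨i, f, r, rfl, hf, hr⟩
  · exact ⟨c.length, 0, [], by simpa using h0, by simp, by simp⟩
  obtain ⟨P, x', x, hP, hx', hx⟩ : ∃ P x' x, [a, x1, x2] ++ List.replicate i 3 = P ++ [x', x] ∧ D x' ∧ D x := by
    match i with
    | 0 => exact ⟨[a], x1, x2, rfl, hx1, hx2⟩
    | 1 => exact ⟨[a, x1], x2, 3, rfl, hx2, by decide⟩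
    | n + 2 => exact ⟨[a, x1, x2] ++ List.replicate n 3, 3, 3, by
        rw [List.replicate_add]; simp [List.replicate], by decide, by decide⟩
  have hl1 : l = P ++ [x', x] ++ f :: (r ++ [y2, y1, e]) := by
    rw [← hP, hl]; simp
  clear hl
  rcases hf with rfl | rfl
  · rcases split3 r hr with h0 | ⟨n, f, s, rfl, hf, hs⟩
    · exact ⟨i, r.length, [2], by rw [← h0]; simp, by simp, by simp⟩
    obtain ⟨y, y', q, hq, hy, hy'⟩ := suf s hs
    rcases hf with rfl | rfl
    swap
    · exact (irr_24 (j := n) (p := P ++ [x']) (q := y' :: q) h hx hy (by rw [hl1]; simp [hq])).elim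
    rcases n with _ | n
    swap
    · exact (irr_22 (j := n) (p := P) (q := q) h hx hy hx' hy' (by
        rw [hl1]; simp [hq, List.replicate_succ])).elim
    clear hq hy hy' y y' q
    rcases split3 s hs with h0 | ⟨n, f, s', rfl, hf, hs'⟩
    · exact ⟨i, s.length, [2, 2], by rw [← h0]; simp, by simp, by simp⟩
    obtain ⟨y, y', q, hq, hy, hy'⟩ := suf s' hs'
    rcases hf with rfl | rfl
    swap
    · exact (irr_24 (x := 2) (j := n) (p := P ++ [x', x]) (q := y' :: q) h (by decide) hy
        (by rw [hl1]; simp [hq])).elim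
    rcases n with _ | n
    swap
    · exact (irr_22 (x := 2) (x' := x) (j := n) (p := P ++ [x']) (q := q) h (by decide) hy hx hy' (by
        rw [hl1]; simp [hq, List.replicate_succ])).elim
    clear hq hy hy' y y' q
    rcases split3 s' hs' with h0 | ⟨n, f, s, rfl, hf, hs⟩
    · exact ⟨i, s'.length, [2, 2, 2], by rw [← h0]; simp, by simp, by simp⟩
    obtain ⟨y, y', q, hq, hy, hy'⟩ := suf s hs
    rcases hf with rfl | rfl
    swap
    · exact (irr_24 (x := 2) (j := n) (p := P ++ [x', x, 2]) (q := y' :: q) h (by decide) hy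
        (by rw [hl1]; simp [hq])).elim
    rcases n with _ | n
    swap
    · exact (irr_22 (x := 2) (x' := 2) (j := n) (p := P ++ [x', x]) (q := q) h (by decide) hy (by decide) hy' (by
        rw [hl1]; simp [hq, List.replicate_succ])).elim
    exact (irr_2222 (j := 0) (p := P ++ [x']) (q := y' :: q) h hx hy (by rw [hl1]; simp [hq])).elim
  · rcases split3 r hr with h0 | ⟨n, f, s, rfl, hf, hs⟩
    · exact ⟨i, r.length, [4], by rw [← h0]; simp, by simp, by simp⟩
    obtain ⟨y, y', q, hq, hy, hy'⟩ := suf s hs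
    exact (irr_4 (j := n) (p := P ++ [x']) (q := y' :: q) h hx hy hf (by rw [hl1]; simp [hq])).elim

/-- Short digit lists. -/
def FS : Set (List ℕ) := (fun l : List (Fin 5) => l.map Fin.val) '' {l | l.length ≤ 5}

theorem FS_finite : FS.Finite := (List.finite_length_le (Fin 5) 5).image _

theorem mem_FS {l : List ℕ} (h : l.length ≤ 5) (h4 : ∀ y ∈ l, y ≤ 4) : l ∈ FS := by
  refine ⟨l.map (fun n => Fin.ofNat 5 n), by simpa using h, ?_⟩
  simp only [List.map_map]
  conv_rhs => rw [← List.map_id l]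
  apply List.map_congr_left
  intro y hy
  have := h4 y hy
  simp; omega

theorem irr_form {l : List ℕ} (h : Irr l) : ∃ u ∈ FS, ∃ v ∈ FS, ∃ t ∈ FS, ∃ i j,
    l = u ++ (List.replicate i 3 ++ (v ++ (List.replicate j 3 ++ t))) := by
  have h4 := irr_le4 h
  by_cases hlen : l.length ≤ 5
  · exact ⟨l, mem_FS hlen h4, [], mem_FS (by simp) (by simp), [], mem_FS (by simp) (by simp), 0, 0,
      by simp⟩
  · obtain ⟨a, x1, x2, c, y2, y1, e, hl⟩ : ∃ a x1 x2 c y2 y1 e, l = [a, x1, x2] ++ c ++ [y2, y1, e] := by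
      match l, hlen with
      | a :: x1 :: x2 :: m, hlen =>
        have hm : 3 ≤ m.length := by simp at hlen; omega
        have h1 := List.take_append_drop (m.length - 3) m
        have h2 : (m.drop (m.length - 3)).length = 3 := by simp; omega
        obtain ⟨y2, y1, e, h3⟩ := List.length_eq_three.1 h2
        exact ⟨a, x1, x2, m.take (m.length - 3), y2, y1, e, by rw [← h3]; simp⟩
      | [], hlen => simp at hlen
      | [_], hlen => simp at hlen
      | [_, _], hlen => simp at hlen
    have hd : ∀ y ∈ [x1, x2] ++ c ++ [y2, y1], D y := by
      apply irr_interior (a := a) (e := e)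
      convert h using 1
      rw [hl]; simp
    obtain ⟨i, j, v, hc, hv, hv4⟩ := core_form h hl hd
    refine ⟨[a, x1, x2], mem_FS (by simp) ?_, v, mem_FS (by omega) hv4, [y2, y1, e],
      mem_FS (by simp) ?_, i, j, ?_⟩
    · intro y hy; exact h4 y (by rw [hl]; simp at hy ⊢; tauto)
    · intro y hy; exact h4 y (by rw [hl]; simp at hy ⊢; tauto)
    · rw [hl, hc]; simp

/-- Words whose digit sequence has the normal form. -/
def OptW (w : List Bool) : Prop := ∃ u ∈ FS, ∃ v ∈ FS, ∃ t ∈ FS, ∃ i j,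
  false :: w = fw (u ++ (List.replicate i 3 ++ (v ++ (List.replicate j 3 ++ t))))

theorem exists_digits (w : List Bool) : ∃ l, false :: w = fw l := by
  induction w with
  | nil => exact ⟨[0], rfl⟩
  | cons t w ih =>
    obtain ⟨l, hl⟩ := ih
    cases t with
    | false => exact ⟨0 :: l, by rw [hl]; simp [fw]⟩
    | true =>
      cases l with
      | nil => simp [fw] at hl
      | cons a l =>
        refine ⟨(a + 1) :: l, ?_⟩
        simp only [fw, List.flatMap_cons, List.cons_append, List.cons.injEq, true_and] at hl
        rw [hl]
        simp [fw, List.replicate_succ]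

theorem posmax (w : List Bool) : ∃ w', w'.length = w.length ∧ OptW w' ∧ Q.le (wm w) (wm w') := by
  obtain ⟨l, hl⟩ := exists_digits w
  obtain ⟨l', h1, h2, h3⟩ := exists_irr l
  have hne : ∃ w', false :: w' = fw l' := by
    cases l' with
    | nil =>
      exfalso
      have h5 := congrArg List.length hl
      change _ = wt l at h5
      rw [← h1] at h5
      simp [wt_nil] at h5
    | cons a l' => exact ⟨_, by simp only [fw, List.flatMap_cons, List.cons_append]; rfl⟩
  obtain ⟨w', hw'⟩ := hne
  refine ⟨w', ?_, ?_, ?_⟩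
  · simp only [wt, ← hl, ← hw'] at h1
    simpa using h1
  · obtain ⟨u, hu, v, hv, t, ht, i, j, e⟩ := irr_form h3
    exact ⟨u, hu, v, hv, t, ht, i, j, by rw [hw', e]⟩
  · simp only [mat, ← hl, ← hw', wm, letM, Q.mul, Q.le] at h2
    simp only [Q.le]
    simp at h2
    tauto

def G1 (w : List Bool) : Prop := ∃ j v, w = List.replicate j true ++ v ∧ OptW v

def G3 (w : List Bool) : Prop := ∃ v : List Bool, ∃ m, v.length ≤ 2 ∧ w = v ++ List.replicate m false

def Good (w : List Bool) : Prop := G1 w ∨ (∃ v, w = false :: v ∧ G1 v) ∨ G3 w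

theorem good_finset : ∃ K : ℕ, 1 ≤ K ∧ ∀ k : ℕ, ∃ F : Finset (List Bool),
    (∀ w, w.length = k → Good w → w ∈ F) ∧ F.card ≤ K * (k + 1) ^ 3 := by
  classical
  let FF := FS_finite.toFinset
  let F2 := (List.finite_length_le Bool 2).toFinset
  refine ⟨2 * FF.card ^ 3 + F2.card + 1, by omega, fun k => ?_⟩
  let R := Finset.range (k + 1)
  let A : Finset (List Bool) := ((R ×ˢ R ×ˢ R) ×ˢ (FF ×ˢ FF ×ˢ FF)).image
    (fun p => List.replicate p.1.1 true ++ (fw (p.2.1 ++ (List.replicate p.1.2.1 3 ++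
      (p.2.2.1 ++ (List.replicate p.1.2.2 3 ++ p.2.2.2))))).tail)
  let B : Finset (List Bool) := (F2 ×ˢ R).image (fun p => p.1 ++ List.replicate p.2 false)
  have hA : ∀ w : List Bool, w.length ≤ k → G1 w → w ∈ A := by
    rintro w hw ⟨m, x, rfl, u, hu, v, hv, t, ht, i, j, e⟩
    have hlen := congrArg List.length e
    change _ = wt _ at hlen
    simp only [wt_append, wt_replicate, List.length_cons] at hlen
    simp only [List.length_append, List.length_replicate] at hw
    refine Finset.mem_image.2 ⟨((m, i, j), (u, v, t)), ?_, ?_⟩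
    · simp only [Finset.mem_product, R, Finset.mem_range, FF, Set.Finite.mem_toFinset]
      exact ⟨⟨by omega, by omega, by omega⟩, hu, hv, ht⟩
    · simp only [← e, List.tail_cons]
  refine ⟨A ∪ A.image (fun w => false :: w) ∪ B, ?_, ?_⟩
  · rintro w hw (h | ⟨v, rfl, h⟩ | ⟨v, m, hv, rfl⟩)
    · exact Finset.mem_union_left _ (Finset.mem_union_left _ (hA w hw.le h))
    · refine Finset.mem_union_left _ (Finset.mem_union_right _ (Finset.mem_image_of_mem _ (hA v ?_ h)))
      simp at hw; omega
    · refine Finset.mem_union_right _ (Finset.mem_image.2 ⟨(v, m), ?_, rfl⟩)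
      simp at hw
      simp only [Finset.mem_product, R, Finset.mem_range, F2, Set.Finite.mem_toFinset]
      exact ⟨hv, by omega⟩
  · have cA : A.card ≤ (k + 1) ^ 3 * FF.card ^ 3 := by
      refine Finset.card_image_le.trans (le_of_eq ?_)
      simp only [Finset.card_product, R, Finset.card_range]; ring
    have cB : B.card ≤ F2.card * (k + 1) := by
      refine Finset.card_image_le.trans (le_of_eq ?_)
      simp only [Finset.card_product, R, Finset.card_range]
    have c1 := Finset.card_union_le (A ∪ A.image (fun w => false :: w)) B
    have c2 := Finset.card_union_le A (A.image (fun w => false :: w))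
    have c3 : (A.image (fun w => false :: w)).card ≤ A.card := Finset.card_image_le
    have c4 : k + 1 ≤ (k + 1) ^ 3 := Nat.le_self_pow (by omega) _
    nlinarith

/-- Value of the functional `(c0,c1)` on the image of `(b0,b1)`. -/
def V (c0 c1 : ℝ) (m : Q) (b0 b1 : ℝ) : ℝ :=
  c0 * (m.a * b0 + m.b * b1) + c1 * (m.c * b0 + m.d * b1)

theorem V_true (c0 c1 : ℝ) (w : List Bool) (b0 b1 : ℝ) :
    V c0 c1 (wm (true :: w)) b0 b1 = V c0 (c0 + c1) (wm w) b0 b1 := by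
  simp [V, wm, letM, Q.mul]; ring

theorem V_false (c0 c1 : ℝ) (w : List Bool) (b0 b1 : ℝ) :
    V c0 c1 (wm (false :: w)) b0 b1 = V c1 c0 (wm w) b0 b1 := by
  simp [V, wm, letM, Q.mul]; ring

theorem V_mono {c0 c1 c0' c1' : ℝ} (m : Q) {b0 b1 : ℝ} (h0 : 0 ≤ b0) (h1 : 0 ≤ b1)
    (h : c0 ≤ c0') (h' : c1 ≤ c1') : V c0 c1 m b0 b1 ≤ V c0' c1' m b0 b1 := by
  unfold V; gcongr

theorem V_le {c0 c1 : ℝ} {m m' : Q} {b0 b1 : ℝ} (h0 : 0 ≤ b0) (h1 : 0 ≤ b1)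
    (h : 0 ≤ c0) (h' : 0 ≤ c1) (hm : Q.le m m') : V c0 c1 m b0 b1 ≤ V c0 c1 m' b0 b1 := by
  obtain ⟨e1, e2, e3, e4⟩ := hm
  unfold V; gcongr

theorem optW_nil : OptW [] :=
  ⟨[0], mem_FS (by simp) (by simp), [], mem_FS (by simp) (by simp), [], mem_FS (by simp) (by simp),
    0, 0, rfl⟩

theorem optW_S : OptW [false] :=
  ⟨[0, 0], mem_FS (by simp) (by simp), [], mem_FS (by simp) (by simp), [],
    mem_FS (by simp) (by simp), 0, 0, rfl⟩

theorem G1_of {w : List Bool} (h : OptW w) : G1 w := ⟨0, w, by simp, h⟩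

theorem G1_true {w : List Bool} (h : G1 w) : G1 (true :: w) := by
  obtain ⟨j, v, rfl, hv⟩ := h
  exact ⟨j + 1, v, by simp [List.replicate_succ], hv⟩

theorem mixmax {b0 b1 : ℝ} (h0 : 0 ≤ b0) (h1 : 0 ≤ b1) {c0 : ℝ} (hc : 0 ≤ c0) (n : ℕ) :
    ∀ (c1 : ℝ) (w : List Bool), w.length = n → ∃ w', w'.length = n ∧ G1 w' ∧
      V c0 c1 (wm w) b0 b1 ≤ V c0 c1 (wm w') b0 b1 := by
  induction n with
  | zero =>
    intro c1 w hw
    rw [List.length_eq_zero_iff] at hw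
    exact ⟨[], rfl, G1_of optW_nil, by rw [hw]⟩
  | succ n ih =>
    intro c1 w hw
    by_cases hc1 : 0 ≤ c1
    · obtain ⟨w', e1, e2, e3⟩ := posmax w
      exact ⟨w', e1.trans hw, G1_of e2, V_le h0 h1 hc hc1 e3⟩
    push Not at hc1
    have step : ∀ w1 : List Bool, w1.length = n → ∃ w', w'.length = n + 1 ∧ G1 w' ∧
      V c0 c1 (wm (true :: w1)) b0 b1 ≤ V c0 c1 (wm w') b0 b1 := by
      intro w1 hw1
      obtain ⟨v, e1, e2, e3⟩ := ih (c0 + c1) w1 hw1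
      exact ⟨true :: v, by simp [e1], G1_true e2, by rw [V_true, V_true]; exact e3⟩
    match w, hw with
    | true :: w1, hw => exact step w1 (by simpa using hw)
    | [false], hw => exact ⟨[false], hw, G1_of optW_S, le_rfl⟩
    | false :: t :: w2, hw =>
      obtain ⟨w', e1, e2, e3⟩ := step (true :: w2) (by simpa using hw)
      refine ⟨w', e1, e2, le_trans ?_ e3⟩
      cases t
      · simp only [V_true, V_false]
        exact V_mono _ h0 h1 (by linarith) (by linarith)
      · simp only [V_true, V_false]
        exact V_mono _ h0 h1 (by linarith) (by linarith)

theorem minlem (w : List Bool) : ∃ w', w'.length = w.length ∧ G3 w' ∧ Q.le (wm w') (wm w) := by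
  induction w with
  | nil => exact ⟨[], rfl, ⟨[], 0, by simp, rfl⟩, Q.le_refl _⟩
  | cons t w ih =>
    obtain ⟨w', e1, ⟨v, m, hv, rfl⟩, e3⟩ := ih
    have e4 : Q.le (wm (t :: (v ++ List.replicate m false))) (wm (t :: w)) :=
      Q.le_mul (Q.le_refl _) e3
    have small : v.length ≤ 1 → ∃ w', w'.length = (t :: w).length ∧ G3 w' ∧ Q.le (wm w') (wm (t :: w)) :=
      fun hv' => ⟨t :: (v ++ List.replicate m false), by simp [← e1],
        ⟨t :: v, m, by simpa using hv', by simp⟩, e4⟩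
    match v, hv, e1, e4, small with
    | [], _, _, _, small => exact small (by simp)
    | [p], _, _, _, small => exact small (by simp)
    | [p, q], _, e1, e4, _ =>
      have key : ∀ t p q : Bool, ∃ p' q' : Bool, Q.le (wm [p', q', false]) (wm [t, p, q]) := by decide
      obtain ⟨p', q', hk⟩ := key t p q
      refine ⟨[p', q'] ++ List.replicate (m + 1) false, ?_, ⟨[p', q'], m + 1, by simp, rfl⟩, ?_⟩
      · simp at e1 ⊢; omega
      · refine Q.le_trans ?_ e4
        have a1 : [p', q'] ++ List.replicate (m + 1) false = [p', q', false] ++ List.replicate m false := by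
          simp [List.replicate_succ]
        have a2 : t :: ([p, q] ++ List.replicate m false) = [t, p, q] ++ List.replicate m false := by simp
        rw [a1, a2, wm_append, wm_append]
        exact Q.le_mul hk (Q.le_refl _)

theorem exitmax {b0 b1 : ℝ} (h0 : 0 ≤ b0) (h1 : 0 ≤ b1) (c0 c1 : ℝ) (w : List Bool) :
    ∃ w', w'.length = w.length ∧ Good w' ∧ V c0 c1 (wm w) b0 b1 ≤ V c0 c1 (wm w') b0 b1 := by
  by_cases hc0 : 0 ≤ c0
  · obtain ⟨w', e1, e2, e3⟩ := mixmax h0 h1 hc0 _ c1 w rfl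
    exact ⟨w', e1, Or.inl e2, e3⟩
  push Not at hc0
  by_cases hc1 : 0 ≤ c1
  · have step : ∀ w1 : List Bool, ∃ w', w'.length = w1.length + 1 ∧ Good w' ∧
      V c0 c1 (wm (false :: w1)) b0 b1 ≤ V c0 c1 (wm w') b0 b1 := by
      intro w1
      obtain ⟨v, e1, e2, e3⟩ := mixmax h0 h1 hc1 _ c0 w1 rfl
      exact ⟨false :: v, by simp [e1], Or.inr (Or.inl ⟨v, rfl, e2⟩), by rw [V_false, V_false]; exact e3⟩
    match w with
    | [] => exact ⟨[], rfl, Or.inl (G1_of optW_nil), le_rfl⟩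
    | false :: w1 => exact step w1
    | [true] => exact ⟨[true], rfl, Or.inl (G1_true (G1_of optW_nil)), le_rfl⟩
    | true :: t :: w2 =>
      obtain ⟨w', e1, e2, e3⟩ := step (true :: w2)
      refine ⟨w', e1, e2, le_trans ?_ e3⟩
      cases t
      · simp only [V_true, V_false]
        exact V_mono _ h0 h1 (by linarith) (by linarith)
      · simp only [V_true, V_false]
        exact V_mono _ h0 h1 (by linarith) (by linarith)
  · push Not at hc1
    obtain ⟨w', e1, e2, e3⟩ := minlem w
    refine ⟨w', e1, Or.inr (Or.inr e2), ?_⟩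
    have := V_le h0 h1 (by linarith : 0 ≤ -c0) (by linarith : 0 ≤ -c1) e3
    unfold V at *
    linarith

def app (m : Q) (v : Fin 2 → ℝ) : Fin 2 → ℝ := ![m.a * v 0 + m.b * v 1, m.c * v 0 + m.d * v 1]

theorem app_mul (x y : Q) (v : Fin 2 → ℝ) : app (Q.mul x y) v = app x (app y v) := by
  ext i; fin_cases i <;> simp [app, Q.mul] <;> ring

theorem app_one (v : Fin 2 → ℝ) : app Q.one v = v := by
  ext i; fin_cases i <;> simp [app, Q.one]

theorem app_append (x y : List Bool) (v : Fin 2 → ℝ) : app (wm (x ++ y)) v = app (wm x) (app (wm y) v) := by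
  rw [wm_append, app_mul]

def XW (a : Fin 2 → ℝ) (k : ℕ) : Set (Fin 2 → ℝ) := {x | ∃ w : List Bool, w.length = k ∧ x = app (wm w) a}

theorem M1_app (v : Fin 2 → ℝ) : M1.mulVec v = app (letM false) v := by
  ext i; fin_cases i <;> simp [M1, app, letM, Matrix.mulVec, dotProduct]

theorem M2_app (v : Fin 2 → ℝ) : M2.mulVec v = app (letM true) v := by
  ext i; fin_cases i <;> simp [M2, app, letM, Matrix.mulVec, dotProduct]

theorem XSeq_eq (a : Fin 2 → ℝ) (k : ℕ) : XSeq {M1, M2} a k = XW a k := by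
  induction k with
  | zero =>
    ext x
    simp [XSeq, XW, wm, app_one]
  | succ k ih =>
    ext x
    simp only [XSeq, ih, XW, Set.mem_iUnion, Set.mem_image, Set.mem_setOf_eq, Set.mem_insert_iff,
      Set.mem_singleton_iff]
    constructor
    · rintro ⟨A, rfl | rfl, y, ⟨w, hw, rfl⟩, rfl⟩
      · exact ⟨false :: w, by simp [hw], by rw [M1_app, wm, app_mul]⟩
      · exact ⟨true :: w, by simp [hw], by rw [M2_app, wm, app_mul]⟩
    · rintro ⟨w, hw, rfl⟩
      match w, hw with
      | false :: w, hw => exact ⟨M1, Or.inl rfl, _, ⟨w, by simpa using hw, rfl⟩, by rw [M1_app, wm, app_mul]⟩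
      | true :: w, hw => exact ⟨M2, Or.inr rfl, _, ⟨w, by simpa using hw, rfl⟩, by rw [M2_app, wm, app_mul]⟩

/-- `C` is a finite subset of `X` attaining all maxima of linear functionals. -/
def Cov (X : Set (Fin 2 → ℝ)) (C : Finset (Fin 2 → ℝ)) : Prop :=
  (∀ y ∈ C, y ∈ X) ∧ ∀ c0 c1 : ℝ, ∀ x ∈ X, ∃ y ∈ C, c0 * x 0 + c1 * x 1 ≤ c0 * y 0 + c1 * y 1

theorem V_app (c0 c1 : ℝ) (m : Q) (b : Fin 2 → ℝ) :
    c0 * app m b 0 + c1 * app m b 1 = V c0 c1 m (b 0) (b 1) := by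
  simp [V, app]

theorem cov_exit : ∃ K : ℕ, 1 ≤ K ∧ ∀ (b : Fin 2 → ℝ) (k : ℕ), 0 ≤ b 0 * b 1 →
    ∃ C, Cov (XW b k) C ∧ C.card ≤ K * (k + 1) ^ 3 := by
  classical
  obtain ⟨K, hK, hF⟩ := good_finset
  refine ⟨K, hK, fun b k hb => ?_⟩
  obtain ⟨F, hF1, hF2⟩ := hF k
  refine ⟨(F.filter (fun w => w.length = k)).image (fun w => app (wm w) b), ⟨?_, ?_⟩, ?_⟩
  · intro y hy
    obtain ⟨w, hw, rfl⟩ := Finset.mem_image.1 hy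
    exact ⟨w, (Finset.mem_filter.1 hw).2, rfl⟩
  · rintro c0 c1 x ⟨w, hw, rfl⟩
    have : ∃ w', w'.length = w.length ∧ Good w' ∧
        V c0 c1 (wm w) (b 0) (b 1) ≤ V c0 c1 (wm w') (b 0) (b 1) := by
      rcases mul_nonneg_iff.1 hb with ⟨p, q⟩ | ⟨p, q⟩
      · exact exitmax p q c0 c1 w
      · obtain ⟨w', e1, e2, e3⟩ := exitmax (neg_nonneg.2 p) (neg_nonneg.2 q) (-c0) (-c1) w
        refine ⟨w', e1, e2, ?_⟩
        unfold V at *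
        linarith
    obtain ⟨w', e1, e2, e3⟩ := this
    refine ⟨_, Finset.mem_image_of_mem _ (Finset.mem_filter.2 ⟨hF1 w' (e1.trans hw) e2, e1.trans hw⟩), ?_⟩
    simpa only [V_app] using e3
  · exact Finset.card_image_le.trans ((Finset.card_filter_le _ _).trans hF2)

theorem SS (w : List Bool) (v : Fin 2 → ℝ) : app (wm (w ++ [false, false])) v = app (wm w) v := by
  rw [app_append]
  congr 1
  ext i; fin_cases i <;> simp [app, wm, letM, Q.mul, Q.one]

theorem word_cases (a : Fin 2 → ℝ) (k : ℕ) : ∀ w : List Bool, w.length = k →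
    app (wm w) a = app (wm (List.replicate k false)) a ∨
    (∃ w2 : List Bool, w2.length + 1 = k ∧ app (wm w) a = app (wm w2) (app (wm [true]) a)) ∨
    (∃ w2 : List Bool, w2.length + 2 = k ∧ app (wm w) a = app (wm w2) (app (wm [true, false]) a)) := by
  induction k using Nat.strong_induction_on with
  | _ k ih =>
    intro w hw
    rcases List.eq_nil_or_concat' w with rfl | ⟨w1, t, rfl⟩
    · left; subst hw; rfl
    cases t
    swap
    · right; left
      exact ⟨w1, by simpa using hw, app_append _ _ _⟩
    rcases List.eq_nil_or_concat' w1 with rfl | ⟨w0, t, rfl⟩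
    · left; subst hw; rfl
    cases t
    swap
    · right; right
      exact ⟨w0, by simpa using hw, by rw [← app_append]; simp⟩
    have e : w0 ++ [false] ++ [false] = w0 ++ [false, false] := by simp
    rw [e, SS]
    have hk : k = w0.length + 2 := by rw [← hw]; simp
    rcases ih w0.length (by omega) w0 rfl with h | ⟨w2, h1, h2⟩ | ⟨w2, h1, h2⟩
    · left
      rw [h, hk, List.replicate_add]
      exact (SS _ _).symm
    · right; left
      exact ⟨w2 ++ [false, false], by simp; omega, by rw [SS, h2]⟩
    · right; right
      exact ⟨w2 ++ [false, false], by simp; omega, by rw [SS, h2]⟩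

theorem cov_all : ∃ K : ℕ, 1 ≤ K ∧ ∀ (k : ℕ) (a : Fin 2 → ℝ),
    ∃ C, Cov (XW a k) C ∧ C.card ≤ (k + 1) * (K * (k + 1) ^ 3 + 1) := by
  classical
  obtain ⟨K, hK, hE⟩ := cov_exit
  refine ⟨K, hK, fun k => ?_⟩
  induction k using Nat.strong_induction_on with
  | _ k ih =>
  intro a
  have mono : ∀ m, m ≤ k → K * (m + 1) ^ 3 ≤ K * (k + 1) ^ 3 := fun m hm => by gcongr
  by_cases ha : 0 ≤ a 0 * a 1
  · obtain ⟨C, h1, h2⟩ := hE a k ha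
    exact ⟨C, h1, by nlinarith⟩
  have sub1 : ∀ r, r + 1 = k → ∀ y ∈ XW (app (wm [true]) a) r, y ∈ XW a k := by
    rintro r hr y ⟨w, hw, rfl⟩
    exact ⟨w ++ [true], by simp [hw, hr], (app_append _ _ _).symm⟩
  have sub2 : ∀ r, r + 2 = k → ∀ y ∈ XW (app (wm [true, false]) a) r, y ∈ XW a k := by
    rintro r hr y ⟨w, hw, rfl⟩
    exact ⟨w ++ [true, false], by simp [hw, hr], (app_append _ _ _).symm⟩
  have sub0 : app (wm (List.replicate k false)) a ∈ XW a k := ⟨_, by simp, rfl⟩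
  match k, ih, mono, sub1, sub2, sub0 with
  | 0, _, _, _, _, sub0 =>
    refine ⟨{app (wm (List.replicate 0 false)) a}, ⟨by simpa using sub0, ?_⟩, by simp⟩
    rintro c0 c1 x ⟨w, hw, rfl⟩
    rw [List.length_eq_zero_iff] at hw
    subst hw
    exact ⟨_, Finset.mem_singleton_self _, le_rfl⟩
  | 1, ih, mono, sub1, sub2, sub0 =>
    obtain ⟨C, h1, h2⟩ := ih 0 (by omega) (app (wm [true]) a)
    refine ⟨insert (app (wm (List.replicate 1 false)) a) C, ⟨?_, ?_⟩, ?_⟩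
    · intro y hy
      rcases Finset.mem_insert.1 hy with rfl | hy
      · exact sub0
      · exact sub1 0 rfl y (h1.1 y hy)
    · rintro c0 c1 x ⟨w, hw, rfl⟩
      rcases word_cases a 1 w hw with h | ⟨w2, e1, e2⟩ | ⟨w2, e1, e2⟩
      · exact ⟨_, Finset.mem_insert_self _ _, by rw [h]⟩
      · obtain ⟨y, hy, hy'⟩ := h1.2 c0 c1 _ ⟨w2, by omega, e2⟩
        exact ⟨y, Finset.mem_insert_of_mem hy, hy'⟩
      · omega
    · have := Finset.card_insert_le (app (wm (List.replicate 1 false)) a) C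
      have := mono 0 (by omega)
      norm_num at *
      omega
  | n + 2, ih, mono, sub1, sub2, sub0 =>
    have key : ∃ C1 C2, Cov (XW (app (wm [true]) a) (n + 1)) C1 ∧
        Cov (XW (app (wm [true, false]) a) n) C2 ∧
        C1.card + C2.card ≤ K * (n + 2 + 1) ^ 3 + (n + 2) * (K * (n + 2 + 1) ^ 3 + 1) := by
      obtain ⟨C1, p1, q1⟩ := ih (n + 1) (by omega) (app (wm [true]) a)
      obtain ⟨C2, p2, q2⟩ := ih n (by omega) (app (wm [true, false]) a)
      have m1 := mono (n + 1) (by omega)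
      have m2 := mono n (by omega)
      have u0 : app (wm [true]) a 0 = a 0 + a 1 := by simp [app, wm, letM, Q.mul, Q.one]
      have u1 : app (wm [true]) a 1 = a 1 := by simp [app, wm, letM, Q.mul, Q.one]
      have v0 : app (wm [true, false]) a 0 = a 0 + a 1 := by simp [app, wm, letM, Q.mul, Q.one]
      have v1 : app (wm [true, false]) a 1 = a 0 := by simp [app, wm, letM, Q.mul, Q.one]
      have hor : 0 ≤ (a 0 + a 1) * a 1 ∨ 0 ≤ (a 0 + a 1) * a 0 := by
        by_contra hcon
        push Not at hcon ha
        have := mul_pos_of_neg_of_neg hcon.1 hcon.2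
        nlinarith [mul_nonneg (neg_nonneg.2 ha.le) (sq_nonneg (a 0 + a 1))]
      rcases hor with h | h
      · obtain ⟨C, p, q⟩ := hE (app (wm [true]) a) (n + 1) (by rw [u0, u1]; exact h)
        refine ⟨C, C2, p, p2, ?_⟩
        have : (n + 1) * (K * (n + 1) ^ 3 + 1) ≤ (n + 2) * (K * (n + 2 + 1) ^ 3 + 1) := by
          gcongr <;> omega
        omega
      · obtain ⟨C, p, q⟩ := hE (app (wm [true, false]) a) n (by rw [v0, v1]; exact h)
        refine ⟨C1, C, p1, p, ?_⟩
        have : (n + 1 + 1) * (K * (n + 1 + 1) ^ 3 + 1) ≤ (n + 2) * (K * (n + 2 + 1) ^ 3 + 1) := by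
          gcongr <;> omega
        omega
    obtain ⟨C1, C2, h1, h2, hcard⟩ := key
    refine ⟨insert (app (wm (List.replicate (n + 2) false)) a) (C1 ∪ C2), ⟨?_, ?_⟩, ?_⟩
    · intro y hy
      rcases Finset.mem_insert.1 hy with rfl | hy
      · exact sub0
      · rcases Finset.mem_union.1 hy with hy | hy
        · exact sub1 (n + 1) rfl y (h1.1 y hy)
        · exact sub2 n rfl y (h2.1 y hy)
    · rintro c0 c1 x ⟨w, hw, rfl⟩
      rcases word_cases a _ w hw with h | ⟨w2, e1, e2⟩ | ⟨w2, e1, e2⟩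
      · exact ⟨_, Finset.mem_insert_self _ _, by rw [h]⟩
      · obtain ⟨y, hy, hy'⟩ := h1.2 c0 c1 _ ⟨w2, by omega, e2⟩
        exact ⟨y, Finset.mem_insert_of_mem (Finset.mem_union_left _ hy), hy'⟩
      · obtain ⟨y, hy, hy'⟩ := h2.2 c0 c1 _ ⟨w2, by omega, e2⟩
        exact ⟨y, Finset.mem_insert_of_mem (Finset.mem_union_right _ hy), hy'⟩
    · have a1 := Finset.card_insert_le (app (wm (List.replicate (n + 2) false)) a) (C1 ∪ C2)
      have a2 := Finset.card_union_le C1 C2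
      have a3 : (n + 2 + 1) * (K * (n + 2 + 1) ^ 3 + 1) =
        K * (n + 2 + 1) ^ 3 + (n + 2) * (K * (n + 2 + 1) ^ 3 + 1) + 1 := by ring
      omega

theorem XW_finite (a : Fin 2 → ℝ) (k : ℕ) : (XW a k).Finite := by
  refine ((List.finite_length_eq Bool k).image (fun w => app (wm w) a)).subset ?_
  rintro x ⟨w, hw, rfl⟩
  exact ⟨w, hw, rfl⟩

theorem ext_sub {X : Set (Fin 2 → ℝ)} (hX : X.Finite) {C : Finset (Fin 2 → ℝ)} (hC : Cov X C) :
    (convexHull ℝ X).extremePoints ℝ ⊆ C := by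
  intro p hp
  have hpX : p ∈ X := extremePoints_convexHull_subset hp
  have hn : p ∉ convexHull ℝ (X \ {p}) := by
    have h1 := ((convex_convexHull ℝ X).mem_extremePoints_iff_mem_diff_convexHull_diff.1 hp).2
    intro h2
    exact h1 (convexHull_mono (Set.diff_subset_diff_left (subset_convexHull ℝ X)) h2)
  obtain ⟨f, u, h1, h2⟩ := geometric_hahn_banach_point_closed (convex_convexHull ℝ (X \ {p}))
    ((hX.subset Set.diff_subset).isClosed_convexHull ℝ) hn
  have hf : ∀ x : Fin 2 → ℝ, f x = f ![1, 0] * x 0 + f ![0, 1] * x 1 := by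
    intro x
    have : x = x 0 • ![1, 0] + x 1 • ![0, 1] := by
      ext i; fin_cases i <;> simp
    conv_lhs => rw [this]
    rw [map_add, map_smul, map_smul]
    simp only [smul_eq_mul]; ring
  obtain ⟨y, hy, hy'⟩ := hC.2 (-f ![1, 0]) (-f ![0, 1]) p hpX
  by_cases hyp : y = p
  · exact hyp ▸ hy
  · have := h2 y (subset_convexHull ℝ _ ⟨hC.1 y hy, hyp⟩)
    rw [hf] at this h1
    linarith

/-- `N_k(Σ₁, a) = O(k⁴)` for `a` in the interior of the second or fourth quadrant. -/
theorem stmt9 : ∃ α : ℝ, 0 < α ∧ ∃ k₀ : ℕ, ∀ a : Fin 2 → ℝ,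
    a ∈ intQ2 ∪ intQ4 → ∀ k : ℕ, k₀ ≤ k →
      (NExt {M1, M2} a k : ℝ) ≤ α * (k : ℝ) ^ 4 := by
  obtain ⟨K, hK, h⟩ := cov_all
  refine ⟨((16 * (K + 1) : ℕ) : ℝ), by positivity, 1, fun a _ k hk => ?_⟩
  obtain ⟨C, h1, h2⟩ := h k a
  have h3 : NExt {M1, M2} a k ≤ C.card := by
    unfold NExt EPts PHull
    rw [XSeq_eq, ← Set.ncard_coe_finset C]
    exact Set.ncard_le_ncard (ext_sub (XW_finite a k) h1) C.finite_toSet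
  have h4 : (k + 1) * (K * (k + 1) ^ 3 + 1) ≤ 16 * (K + 1) * k ^ 4 := by
    have e1 : (k + 1) ^ 4 ≤ (2 * k) ^ 4 := Nat.pow_le_pow_left (by omega) 4
    have e2 : k + 1 ≤ (k + 1) ^ 4 := Nat.le_self_pow (by omega) _
    calc (k + 1) * (K * (k + 1) ^ 3 + 1) = K * (k + 1) ^ 4 + (k + 1) := by ring
      _ ≤ K * (k + 1) ^ 4 + (k + 1) ^ 4 := by omega
      _ = (K + 1) * (k + 1) ^ 4 := by ring
      _ ≤ (K + 1) * (2 * k) ^ 4 := by gcongr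
      _ = _ := by ring
  have h5 := h3.trans (h2.trans h4)
  exact_mod_cast h5

end
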